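/- Let ℓ be a positive integer. There exist constants c, C > 0 such that for all integers m ≥ 0: c · 2^{m/ℓ} Γ(m/ℓ + 1) ≤ Γ((m+1)/ℓ)² · Σ_{k=0}^{m} 1/(Γ((k+1)/ℓ) Γ((m−k+1)/ℓ)) ≤ C · 2^{m/ℓ} Γ(m/ℓ + 1). -/

import Mathlib

/-!
For `a = 1 / ℓ` the sum is `R a m = ∑_{i + j = m} 1 / (Γ(a + i/ℓ) Γ(a + j/ℓ))`. Weighting the
terms of `R a (m + ℓ)` by `(a - 1 + i/ℓ) + (a - 1 + j/ℓ)`, which is constant, and using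
`(x - 1) / Γ(x) = 1 / Γ(x - 1)` and the symmetry of the sum gives
`(2a - 1 + m/ℓ) R a (m + ℓ) = 2 R a m + 2 B`, where `B` collects the terms with `i < ℓ` and
these have the sign of `a - 1 + i/ℓ`. Without `B` this is the recurrence of
`2^{m/ℓ} / Γ(2a - 1 + m/ℓ)`. As `B ≤ 0` for `a ≤ 1/ℓ` and `B ≥ 0` for `a ≥ 1`, a multiple of
this expression bounds `R a` above, respectively below. The lower bound descends from `a + 1` to
`a` since `R (a + 1) m ≤ R a (m + 2ℓ)`. Finally `Γ(x)² ≍ Γ(x - d) Γ(x + d)` by log-convexity, with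
`x = (m + 1)/ℓ` and `d = 1 - 1/ℓ`.
-/

open Filter Asymptotics Finset

lemma exists_forall_ge_of_add_le {α : Type*} [LinearOrder α] {ℓ N : ℕ} (hℓ : 0 < ℓ) {f : ℕ → α}
    (h : ∀ n ≥ N, f (n + ℓ) ≤ f n) : ∃ i, ∀ n, f n ≤ f i := by
  obtain ⟨i, -, hi⟩ := exists_max_image (range (N + ℓ)) f ⟨0, mem_range.2 (by lia)⟩
  refine ⟨i, fun n ↦ ?_⟩
  induction n using Nat.strong_induction_on with
  | _ n ih =>
    obtain hn | hn := lt_or_ge n (N + ℓ)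
    · exact hi n (mem_range.2 hn)
    · calc f n = f (n - ℓ + ℓ) := by rw [Nat.sub_add_cancel (by lia)]
        _ ≤ f (n - ℓ) := h _ (by lia)
        _ ≤ f i := ih _ (by lia)

lemma isBigO_of_mul_le_mul_add {ℓ : ℕ} (hℓ : 0 < ℓ) {f g : ℕ → ℝ} (hf : ∀ᶠ n in atTop, 0 ≤ f n)
    (hg : ∀ᶠ n in atTop, 0 < g n) (h : ∀ᶠ n in atTop, f (n + ℓ) * g n ≤ f n * g (n + ℓ)) :
    f =O[atTop] g := by
  obtain ⟨N, hN⟩ := eventually_atTop.1 (hg.and h)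
  obtain ⟨i, hi⟩ := exists_forall_ge_of_add_le (f := fun n ↦ f n / g n) hℓ fun n hn ↦
    (div_le_div_iff₀ (hN (n + ℓ) (by lia)).1 (hN n hn).1).2 (hN n hn).2
  refine IsBigO.of_bound (f i / g i) ?_
  filter_upwards [hf, hg] with n hfn hgn
  rw [Real.norm_of_nonneg hfn, Real.norm_of_nonneg hgn.le]
  exact (div_le_iff₀ hgn).1 (hi n)

lemma exists_pos_bounds_of_isTheta {f g : ℕ → ℝ} (hf : ∀ n, 0 < f n) (hg : ∀ n, 0 < g n)
    (h : f =Θ[atTop] g) :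
    ∃ c C : ℝ, 0 < c ∧ 0 < C ∧ ∀ n, c * g n ≤ f n ∧ f n ≤ C * g n := by
  obtain ⟨C, hC, hfg⟩ := bound_of_isBigO_nat_atTop h.1
  obtain ⟨D, hD, hgf⟩ := bound_of_isBigO_nat_atTop h.2
  simp only [Real.norm_of_nonneg (hf _).le, Real.norm_of_nonneg (hg _).le] at hfg hgf
  exact ⟨D⁻¹, C, inv_pos.2 hD, hC, fun n ↦
    ⟨(inv_mul_le_iff₀ hD).2 (hgf (hf n).ne'), hfg (hg n).ne'⟩⟩

lemma sum_antidiagonal_add {M : Type*} [AddCommMonoid M] (f : ℕ × ℕ → M) (n k : ℕ) :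
    ∑ p ∈ antidiagonal (n + k), f p =
      ∑ i ∈ range k, f (i, n + k - i) + ∑ p ∈ antidiagonal n, f (p.1 + k, p.2) := by
  rw [Nat.sum_antidiagonal_eq_sum_range_succ_mk, Nat.sum_antidiagonal_eq_sum_range_succ_mk,
    show (n + k).succ = k + n.succ by lia, sum_range_add]
  congr 1
  refine sum_congr rfl fun i _ ↦ ?_
  rw [show n + k - (k + i) = n - i by lia, add_comm k i]

lemma sum_antidiagonal_shift_le {f : ℕ × ℕ → ℝ} (hf : ∀ p, 0 ≤ f p) (n k : ℕ) :
    ∑ p ∈ antidiagonal n, f (p.1 + k, p.2 + k) ≤ ∑ p ∈ antidiagonal (n + 2 * k), f p := by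
  have shift_fst {g : ℕ × ℕ → ℝ} (hg : ∀ p, 0 ≤ g p) (n : ℕ) :
      ∑ p ∈ antidiagonal n, g (p.1 + k, p.2) ≤ ∑ p ∈ antidiagonal (n + k), g p := by
    rw [sum_antidiagonal_add g]
    exact le_add_of_nonneg_left (sum_nonneg fun _ _ ↦ hg _)
  calc ∑ p ∈ antidiagonal n, f (p.1 + k, p.2 + k)
      ≤ ∑ p ∈ antidiagonal (n + k), f (p.1, p.2 + k) :=
        shift_fst (g := fun p ↦ f (p.1, p.2 + k)) (fun _ ↦ hf _) n
    _ = ∑ p ∈ antidiagonal (n + k), f (p.2, p.1 + k) :=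
        (Nat.sum_antidiagonal_swap (f := fun p ↦ f (p.1, p.2 + k))).symm
    _ ≤ ∑ p ∈ antidiagonal (n + k + k), f p.swap :=
        shift_fst (g := fun p ↦ f p.swap) (fun _ ↦ hf _) (n + k)
    _ = ∑ p ∈ antidiagonal (n + 2 * k), f p := by
        rw [Nat.sum_antidiagonal_swap, show n + k + k = n + 2 * k by ring]

lemma inv_Gamma_eq_self_mul_inv_Gamma_add_one (x : ℝ) :
    (Real.Gamma x)⁻¹ = x * (Real.Gamma (x + 1))⁻¹ := by
  obtain rfl | hx := eq_or_ne x 0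
  · simp
  · rw [Real.Gamma_add_one hx, mul_inv, mul_inv_cancel_left₀ hx]

lemma sq_Gamma_le_Gamma_sub_mul_Gamma_add {x d : ℝ} (hd : |d| < x) :
    Real.Gamma x ^ 2 ≤ Real.Gamma (x - d) * Real.Gamma (x + d) := by
  obtain ⟨hd₁, hd₂⟩ := abs_lt.1 hd
  have hsub : 0 < x - d := by linarith
  have hadd : 0 < x + d := by linarith
  have hG := Real.Gamma_pos_of_pos hsub
  have hG' := Real.Gamma_pos_of_pos hadd
  have hmid := Real.convexOn_log_Gamma.2 (Set.mem_Ioi.2 hsub) (Set.mem_Ioi.2 hadd)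
    (by norm_num : (0 : ℝ) ≤ 1 / 2) (by norm_num : (0 : ℝ) ≤ 1 / 2) (by norm_num)
  simp only [smul_eq_mul, Function.comp_apply] at hmid
  rw [show 1 / 2 * (x - d) + 1 / 2 * (x + d) = x by ring] at hmid
  have hx := Real.Gamma_pos_of_pos (by linarith : 0 < x)
  rw [← Real.log_le_log_iff (by positivity) (by positivity), Real.log_pow,
    Real.log_mul hG.ne' hG'.ne']
  push_cast
  linarith

lemma Gamma_sub_mul_Gamma_add_le {x d : ℝ} (hx : 1 < x) (hd₀ : 0 ≤ d) (hd₁ : d ≤ 1) :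
    Real.Gamma (x - d) * Real.Gamma (x + d) ≤ x / (x - 1) * Real.Gamma x ^ 2 := by
  have hx₀ : 0 < x := by linarith
  have hx₁ : 0 < x - 1 := by linarith
  have hG := Real.Gamma_pos_of_pos hx₀
  have hG₁ := Real.Gamma_pos_of_pos hx₁
  have hGsub := Real.Gamma_pos_of_pos (by linarith : 0 < x - d)
  have hGadd := Real.Gamma_pos_of_pos (by linarith : 0 < x + d)
  have hsub := Real.convexOn_log_Gamma.2 (Set.mem_Ioi.2 hx₀) (Set.mem_Ioi.2 hx₁)
    (sub_nonneg.2 hd₁) hd₀ (sub_add_cancel _ _)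
  have hadd := Real.convexOn_log_Gamma.2 (Set.mem_Ioi.2 hx₀)
    (Set.mem_Ioi.2 (by linarith : 0 < x + 1)) (sub_nonneg.2 hd₁) hd₀ (sub_add_cancel _ _)
  simp only [smul_eq_mul, Function.comp_apply] at hsub hadd
  rw [show (1 - d) * x + d * (x - 1) = x - d by ring] at hsub
  rw [show (1 - d) * x + d * (x + 1) = x + d by ring, Real.Gamma_add_one hx₀.ne',
    Real.log_mul hx₀.ne' hG.ne'] at hadd
  have hlogG : Real.log (Real.Gamma x) = Real.log (x - 1) + Real.log (Real.Gamma (x - 1)) := by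
    rw [← Real.log_mul hx₁.ne' hG₁.ne', ← Real.Gamma_add_one hx₁.ne', sub_add_cancel]
  have hlog : Real.log (x - 1) ≤ Real.log x := Real.log_le_log hx₁ (by linarith)
  rw [← Real.log_le_log_iff (by positivity) (by positivity),
    Real.log_mul hGsub.ne' hGadd.ne', Real.log_mul (by positivity) (by positivity),
    Real.log_div hx₀.ne' hx₁.ne', Real.log_pow]
  push_cast
  linear_combination hsub + hadd - d * hlogG + mul_le_mul_of_nonneg_right hd₁ (sub_nonneg.2 hlog)

lemma isTheta_sq_Gamma {d : ℝ} (hd₀ : 0 ≤ d) (hd₁ : d ≤ 1) :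
    (fun x ↦ Real.Gamma x ^ 2) =Θ[atTop] fun x ↦ Real.Gamma (x - d) * Real.Gamma (x + d) := by
  have norm_eq {x : ℝ} (hx : 2 ≤ x) : ‖Real.Gamma (x - d) * Real.Gamma (x + d)‖ =
      Real.Gamma (x - d) * Real.Gamma (x + d) :=
    Real.norm_of_nonneg (mul_nonneg (Real.Gamma_nonneg_of_nonneg (by linarith))
      (Real.Gamma_nonneg_of_nonneg (by linarith)))
  constructor
  · refine IsBigO.of_bound' ?_
    filter_upwards [eventually_ge_atTop 2] with x hx
    rw [norm_eq hx, Real.norm_of_nonneg (sq_nonneg _)]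
    exact sq_Gamma_le_Gamma_sub_mul_Gamma_add (abs_lt.2 ⟨by linarith, by linarith⟩)
  · refine IsBigO.of_bound 2 ?_
    filter_upwards [eventually_ge_atTop 2] with x hx
    rw [norm_eq hx, Real.norm_of_nonneg (sq_nonneg _)]
    have hratio : x / (x - 1) ≤ 2 := (div_le_iff₀ (by linarith)).2 (by linarith)
    exact (Gamma_sub_mul_Gamma_add_le (by linarith) hd₀ hd₁).trans (by gcongr)

/-- The self-convolution at `m` of the sequence `k ↦ 1 / Γ(a + k / ℓ)`; the sum of the theorem
is the case `a = 1 / ℓ`. The free shift `a` allows the comparison of `a` with `a + 1`. -/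
noncomputable def invGammaConv (ℓ : ℕ) (a : ℝ) (m : ℕ) : ℝ :=
  ∑ p ∈ antidiagonal m, (Real.Gamma (a + p.1 / ℓ))⁻¹ * (Real.Gamma (a + p.2 / ℓ))⁻¹

/-- The order of growth `2^{m/ℓ} / Γ(2a - 1 + m/ℓ)` of `invGammaConv ℓ a m`. For small `m` the
argument of `Γ` may be nonpositive, and the value is then meaningless. -/
noncomputable def invGammaScale (ℓ : ℕ) (a : ℝ) (m : ℕ) : ℝ :=
  2 ^ ((m : ℝ) / ℓ) / Real.Gamma (2 * a - 1 + m / ℓ)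

section Convolution

variable {ℓ : ℕ} {a : ℝ}

lemma invGammaConv_one_div (ℓ m : ℕ) :
    invGammaConv ℓ (1 / ℓ) m = ∑ k ∈ range (m + 1),
      1 / (Real.Gamma (((k : ℝ) + 1) / ℓ) * Real.Gamma (((m : ℝ) - k + 1) / ℓ)) := by
  rw [invGammaConv, Nat.sum_antidiagonal_eq_sum_range_succ_mk]
  refine sum_congr rfl fun k hk ↦ ?_
  rw [Nat.cast_sub (mem_range_succ_iff.1 hk), one_div (_ * _), mul_inv, ← add_div, ← add_div,
    add_comm 1, add_comm 1]

lemma inv_Gamma_add_div_nonneg (ha : 0 ≤ a) (k : ℕ) : 0 ≤ (Real.Gamma (a + k / ℓ))⁻¹ :=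
  inv_nonneg.2 (Real.Gamma_nonneg_of_nonneg (by positivity))

lemma invGammaConv_nonneg (ha : 0 ≤ a) (m : ℕ) : 0 ≤ invGammaConv ℓ a m :=
  sum_nonneg fun _ _ ↦ mul_nonneg (inv_Gamma_add_div_nonneg ha _) (inv_Gamma_add_div_nonneg ha _)

lemma invGammaConv_pos (ha : 0 < a) (m : ℕ) : 0 < invGammaConv ℓ a m :=
  sum_pos (fun _ _ ↦ mul_pos (inv_pos.2 (Real.Gamma_pos_of_pos (by positivity)))
    (inv_pos.2 (Real.Gamma_pos_of_pos (by positivity)))) ⟨(0, m), by simp⟩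

lemma invGammaConv_add_one_le (hℓ : 0 < ℓ) (ha : 0 ≤ a) (m : ℕ) :
    invGammaConv ℓ (a + 1) m ≤ invGammaConv ℓ a (m + 2 * ℓ) := by
  refine le_of_eq_of_le ?_ (sum_antidiagonal_shift_le (fun p ↦
    mul_nonneg (inv_Gamma_add_div_nonneg ha p.1) (inv_Gamma_add_div_nonneg ha p.2)) m ℓ)
  refine sum_congr rfl fun p _ ↦ ?_
  have shift (k : ℕ) : a + 1 + (k : ℝ) / ℓ = a + (k + ℓ : ℕ) / ℓ := by
    push_cast
    field_simp
    ring
  rw [shift, shift]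

lemma mul_invGammaConv_eq_two_mul_sum (ℓ : ℕ) (a : ℝ) (m : ℕ) :
    (2 * a - 2 + m / ℓ) * invGammaConv ℓ a m = 2 * ∑ p ∈ antidiagonal m,
      (a - 1 + p.1 / ℓ) * ((Real.Gamma (a + p.1 / ℓ))⁻¹ * (Real.Gamma (a + p.2 / ℓ))⁻¹) := by
  rw [two_mul (∑ _ ∈ _, _)]
  nth_rw 2 [← Nat.sum_antidiagonal_swap]
  rw [← sum_add_distrib, invGammaConv, mul_sum]
  refine sum_congr rfl fun p hp ↦ ?_
  have hm : (m : ℝ) = p.1 + p.2 := by exact_mod_cast (mem_antidiagonal.1 hp).symm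
  rw [hm, Prod.fst_swap, Prod.snd_swap]
  ring

lemma mul_invGammaConv_add (hℓ : 0 < ℓ) (a : ℝ) (m : ℕ) :
    (2 * a - 1 + m / ℓ) * invGammaConv ℓ a (m + ℓ) = 2 * invGammaConv ℓ a m +
      2 * ∑ i ∈ range ℓ, (a - 1 + i / ℓ) *
        ((Real.Gamma (a + i / ℓ))⁻¹ * (Real.Gamma (a + (m + ℓ - i : ℕ) / ℓ))⁻¹) := by
  have hcoeff : 2 * a - 1 + (m : ℝ) / ℓ = 2 * a - 2 + (m + ℓ : ℕ) / ℓ := by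
    push_cast
    field_simp
    ring
  rw [hcoeff, mul_invGammaConv_eq_two_mul_sum, sum_antidiagonal_add, mul_add, add_comm,
    invGammaConv]
  congr 2
  refine sum_congr rfl fun p _ ↦ ?_
  have hsub : a - 1 + ((p.1 + ℓ : ℕ) : ℝ) / ℓ = a + p.1 / ℓ := by
    push_cast
    field_simp
    ring
  have hadd : a + ((p.1 + ℓ : ℕ) : ℝ) / ℓ = a + p.1 / ℓ + 1 := by linarith
  rw [hsub, hadd, ← mul_assoc, ← inv_Gamma_eq_self_mul_inv_Gamma_add_one]

lemma mul_invGammaConv_add_le (hℓ : 0 < ℓ) (ha₀ : 0 ≤ a) (ha : a ≤ 1 / ℓ) (m : ℕ) :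
    (2 * a - 1 + m / ℓ) * invGammaConv ℓ a (m + ℓ) ≤ 2 * invGammaConv ℓ a m := by
  rw [mul_invGammaConv_add hℓ]
  suffices hboundary : ∑ i ∈ range ℓ, (a - 1 + i / ℓ) *
      ((Real.Gamma (a + i / ℓ))⁻¹ * (Real.Gamma (a + (m + ℓ - i : ℕ) / ℓ))⁻¹) ≤ 0 by linarith
  refine sum_nonpos fun i hi ↦ mul_nonpos_of_nonpos_of_nonneg ?_
    (mul_nonneg (inv_Gamma_add_div_nonneg ha₀ _) (inv_Gamma_add_div_nonneg ha₀ _))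
  have hi' : (i : ℝ) + 1 ≤ ℓ := by exact_mod_cast mem_range.1 hi
  have hi_div : 1 / (ℓ : ℝ) + i / ℓ ≤ 1 := by
    rw [← add_div]
    exact div_le_one_of_le₀ (by linarith) (by positivity)
  linarith

lemma le_mul_invGammaConv_add (hℓ : 0 < ℓ) (ha : 1 ≤ a) (m : ℕ) :
    2 * invGammaConv ℓ a m ≤ (2 * a - 1 + m / ℓ) * invGammaConv ℓ a (m + ℓ) := by
  have ha₀ : 0 ≤ a := zero_le_one.trans ha
  rw [mul_invGammaConv_add hℓ]
  refine le_add_of_nonneg_right (mul_nonneg zero_le_two (sum_nonneg fun i _ ↦ mul_nonneg ?_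
    (mul_nonneg (inv_Gamma_add_div_nonneg ha₀ _) (inv_Gamma_add_div_nonneg ha₀ _))))
  exact add_nonneg (sub_nonneg.2 ha) (by positivity)

lemma invGammaScale_pos {m : ℕ} (hm : 0 < 2 * a - 1 + m / ℓ) : 0 < invGammaScale ℓ a m :=
  div_pos (by positivity) (Real.Gamma_pos_of_pos hm)

lemma mul_invGammaScale_add (hℓ : 0 < ℓ) (a : ℝ) (m : ℕ) :
    (2 * a - 1 + m / ℓ) * invGammaScale ℓ a (m + ℓ) = 2 * invGammaScale ℓ a m := by
  have hdiv : ((m + ℓ : ℕ) : ℝ) / ℓ = m / ℓ + 1 := by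
    push_cast
    field_simp
  rw [invGammaScale, invGammaScale, hdiv, ← add_assoc, Real.rpow_add_one two_ne_zero,
    div_eq_mul_inv _ (Real.Gamma _), div_eq_mul_inv _ (Real.Gamma _),
    inv_Gamma_eq_self_mul_inv_Gamma_add_one (2 * a - 1 + m / ℓ)]
  ring

lemma invGammaScale_add_two_mul (hℓ : 0 < ℓ) (a : ℝ) (m : ℕ) :
    invGammaScale ℓ a (m + 2 * ℓ) = 4 * invGammaScale ℓ (a + 1) m := by
  have hdiv : ((m + 2 * ℓ : ℕ) : ℝ) / ℓ = m / ℓ + 2 := by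
    push_cast
    field_simp
  rw [invGammaScale, invGammaScale, hdiv, Real.rpow_add two_pos,
    show 2 * a - 1 + ((m : ℝ) / ℓ + 2) = 2 * (a + 1) - 1 + m / ℓ by ring, Real.rpow_two]
  ring

lemma eventually_pos_two_mul_sub_one_add_div (hℓ : 0 < ℓ) (a : ℝ) :
    ∀ᶠ m : ℕ in atTop, 0 < 2 * a - 1 + m / ℓ :=
  (tendsto_atTop_add_const_left _ _ (tendsto_natCast_atTop_atTop.atTop_div_const
    (Nat.cast_pos.2 hℓ))).eventually_gt_atTop 0

lemma invGammaConv_isBigO_invGammaScale (hℓ : 0 < ℓ) (ha₀ : 0 ≤ a) (ha : a ≤ 1 / ℓ) :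
    invGammaConv ℓ a =O[atTop] invGammaScale ℓ a := by
  have hpos := eventually_pos_two_mul_sub_one_add_div hℓ a
  refine isBigO_of_mul_le_mul_add hℓ (.of_forall (invGammaConv_nonneg ha₀))
    (hpos.mono fun m ↦ invGammaScale_pos) ?_
  filter_upwards [(tendsto_add_atTop_nat ℓ).eventually hpos] with m hmℓ
  have hscale := mul_invGammaScale_add hℓ a m
  have hconv := mul_le_mul_of_nonneg_right (mul_invGammaConv_add_le hℓ ha₀ ha m)
    (invGammaScale_pos hmℓ).le
  linear_combination (1 / 2) * hconv - (1 / 2) * invGammaConv ℓ a (m + ℓ) * hscale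

lemma invGammaScale_isBigO_invGammaConv_of_one_le (hℓ : 0 < ℓ) (ha : 1 ≤ a) :
    invGammaScale ℓ a =O[atTop] invGammaConv ℓ a := by
  have hpos (m : ℕ) : 0 < 2 * a - 1 + (m : ℝ) / ℓ :=
    add_pos_of_pos_of_nonneg (by linarith) (by positivity)
  refine isBigO_of_mul_le_mul_add hℓ (.of_forall fun m ↦ (invGammaScale_pos (hpos m)).le)
    (.of_forall (invGammaConv_pos (zero_lt_one.trans_le ha))) (.of_forall fun m ↦ ?_)
  have hscale := mul_invGammaScale_add hℓ a m
  have hconv := mul_le_mul_of_nonneg_right (le_mul_invGammaConv_add hℓ ha m)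
    (invGammaScale_pos (hpos (m + ℓ))).le
  linear_combination (1 / 2) * hconv + (1 / 2) * invGammaConv ℓ a (m + ℓ) * hscale

lemma invGammaScale_isBigO_invGammaConv (hℓ : 0 < ℓ) (ha : 0 ≤ a) :
    invGammaScale ℓ a =O[atTop] invGammaConv ℓ a := by
  rw [← map_add_atTop_eq_nat (2 * ℓ), isBigO_map]
  have hshift : invGammaConv ℓ (a + 1) =O[atTop] (invGammaConv ℓ a ∘ (· + 2 * ℓ)) := by
    refine .of_bound' (.of_forall fun m ↦ ?_)
    rw [Real.norm_of_nonneg (invGammaConv_nonneg (by linarith) m), Function.comp_apply,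
      Real.norm_of_nonneg (invGammaConv_nonneg ha _)]
    exact invGammaConv_add_one_le hℓ ha m
  have hlarge := invGammaScale_isBigO_invGammaConv_of_one_le (a := a + 1) hℓ (by linarith)
  exact ((hlarge.trans hshift).const_mul_left 4).congr_left fun m ↦
    (invGammaScale_add_two_mul hℓ a m).symm

lemma invGammaConv_isTheta_invGammaScale (hℓ : 0 < ℓ) (ha₀ : 0 ≤ a) (ha : a ≤ 1 / ℓ) :
    invGammaConv ℓ a =Θ[atTop] invGammaScale ℓ a :=
  ⟨invGammaConv_isBigO_invGammaScale hℓ ha₀ ha, invGammaScale_isBigO_invGammaConv hℓ ha₀⟩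

lemma isTheta_sq_Gamma_succ_div (hℓ : 0 < ℓ) :
    (fun m : ℕ ↦ Real.Gamma (((m : ℝ) + 1) / ℓ) ^ 2) =Θ[atTop] fun m : ℕ ↦
      Real.Gamma (2 * (1 / ℓ) - 1 + m / ℓ) * Real.Gamma ((m : ℝ) / ℓ + 1) := by
  have hℓ_one : (1 : ℝ) ≤ ℓ := Nat.one_le_cast.2 hℓ
  have htop : Tendsto (fun m : ℕ ↦ ((m : ℝ) + 1) / ℓ) atTop atTop :=
    (tendsto_atTop_add_const_right _ _ tendsto_natCast_atTop_atTop).atTop_div_const (by linarith)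
  have hΘ := isTheta_sq_Gamma (d := 1 - 1 / (ℓ : ℝ))
    (sub_nonneg.2 (div_le_one_of_le₀ hℓ_one (by linarith))) (sub_le_self _ (by positivity))
  have hsub (m : ℕ) : ((m : ℝ) + 1) / ℓ - (1 - 1 / ℓ) = 2 * (1 / ℓ) - 1 + m / ℓ := by ring
  have hadd (m : ℕ) : ((m : ℝ) + 1) / ℓ + (1 - 1 / ℓ) = m / ℓ + 1 := by ring
  simpa only [IsTheta, Function.comp_def, hsub, hadd] using
    And.intro (hΘ.1.comp_tendsto htop) (hΘ.2.comp_tendsto htop)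

lemma sq_Gamma_mul_invGammaConv_isTheta (hℓ : 0 < ℓ) :
    (fun m : ℕ ↦ Real.Gamma (((m : ℝ) + 1) / ℓ) ^ 2 * invGammaConv ℓ (1 / ℓ) m) =Θ[atTop]
      fun m : ℕ ↦ 2 ^ ((m : ℝ) / ℓ) * Real.Gamma ((m : ℝ) / ℓ + 1) := by
  refine ((isTheta_sq_Gamma_succ_div hℓ).mul
    (invGammaConv_isTheta_invGammaScale hℓ (by positivity) le_rfl)).trans_eventuallyEq ?_
  filter_upwards [eventually_pos_two_mul_sub_one_add_div hℓ (1 / ℓ)] with m hm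
  rw [invGammaScale, mul_right_comm, mul_div_cancel₀ _ (Real.Gamma_pos_of_pos hm).ne']

end Convolution

theorem gamma_sum_estimate_all_m (ℓ : ℕ) (hℓ : 0 < ℓ) :
    ∃ c C : ℝ, 0 < c ∧ 0 < C ∧
      ∀ m : ℕ,
        c * 2 ^ ((m : ℝ) / (ℓ : ℝ)) * Real.Gamma ((m : ℝ) / (ℓ : ℝ) + 1) ≤
          Real.Gamma (((m : ℝ) + 1) / (ℓ : ℝ)) ^ 2 *
            (∑ k ∈ Finset.range (m + 1),
              1 / (Real.Gamma (((k : ℝ) + 1) / (ℓ : ℝ)) *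
                Real.Gamma (((m : ℝ) - (k : ℝ) + 1) / (ℓ : ℝ)))) ∧
        Real.Gamma (((m : ℝ) + 1) / (ℓ : ℝ)) ^ 2 *
            (∑ k ∈ Finset.range (m + 1),
              1 / (Real.Gamma (((k : ℝ) + 1) / (ℓ : ℝ)) *
                Real.Gamma (((m : ℝ) - (k : ℝ) + 1) / (ℓ : ℝ)))) ≤
          C * 2 ^ ((m : ℝ) / (ℓ : ℝ)) * Real.Gamma ((m : ℝ) / (ℓ : ℝ) + 1) := by
  have hpos (m : ℕ) : 0 < Real.Gamma ((m + 1) / ℓ) ^ 2 * invGammaConv ℓ (1 / ℓ) m :=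
    mul_pos (pow_pos (Real.Gamma_pos_of_pos (by positivity)) 2) (invGammaConv_pos (by positivity) m)
  have hpos' (m : ℕ) : 0 < (2 : ℝ) ^ ((m : ℝ) / ℓ) * Real.Gamma (m / ℓ + 1) :=
    mul_pos (by positivity) (Real.Gamma_pos_of_pos (by positivity))
  simpa only [invGammaConv_one_div, ← mul_assoc] using
    exists_pos_bounds_of_isTheta hpos hpos' (sq_Gamma_mul_invGammaConv_isTheta hℓ)
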